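/- Let n ≥ 2, λ > 0, and let X_1,…,X_n be i.i.d. Exponential(λ) random variables. Then τ_n = X̄_n / X_(n) has probability density function f_{τ_n}(t) = (n!/n^{n−1}) · I_{n−1}(n·t − 1) / t^n for t ∈ [1/n, 1], where I_{n−1} denotes the probability density function of the sum of n−1 independent Uniform[0,1] random variables. -/

import Mathlib

open MeasureTheory ProbabilityTheory

/-- The uniform probability measure on `[0, θ]`. -/
noncomputable def uniformMeasure (θ : ℝ) : Measure ℝ :=
  ENNReal.ofReal θ⁻¹ • volume.restrict (Set.Icc 0 θ)

/-- The joint law of an i.i.d. sample of size `n` from `Uniform[0, θ]`. -/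
noncomputable def iidUniform (n : ℕ) (θ : ℝ) : Measure (Fin n → ℝ) :=
  Measure.pi fun _ => uniformMeasure θ

/-- The joint law of an i.i.d. sample of size `n` from `Exponential(r)`. -/
noncomputable def iidExp (n : ℕ) (r : ℝ) : Measure (Fin n → ℝ) :=
  Measure.pi fun _ => expMeasure r

/-- Sample maximum. -/
noncomputable def sampleMax {n : ℕ} (x : Fin n → ℝ) : ℝ := ⨆ i, x i

/-- Empirical mean. -/
noncomputable def sampleMean {n : ℕ} (x : Fin n → ℝ) : ℝ := (∑ i, x i) / n

/-- The mean/max statistic `τ_n`. -/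
noncomputable def tau {n : ℕ} (x : Fin n → ℝ) : ℝ := sampleMean x / sampleMax x

/-- The Irwin–Hall distribution with parameter `m`: the law of the sum of `m`
independent `Uniform[0,1]` random variables. -/
noncomputable def irwinHall (m : ℕ) : Measure ℝ :=
  (iidUniform m 1).map fun u => ∑ i, u i

/-!
The statistic `τ` is invariant under positive scaling, so only the direction of the sample matters.
Cut the positive orthant into the cones on which a given coordinate is the largest and write a
point of the `i`-th cone as `y • v`, where `vᵢ = 1` and the other coordinates `u` of `v` range over
the unit cube; the Jacobian is `y ^ (n - 1)`. The exponential density depends only on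
`∑ xᵢ = y (∑ uⱼ + 1)`, so integrating out `y` is a Gamma integral, proportional to
`(∑ uⱼ + 1) ^ (-n)`, while `τ = (∑ uⱼ + 1) / n` there. Hence `n τ - 1` is distributed on each cone
as an Irwin–Hall variable reweighted by `(s + 1) ^ (-n)`, and the `n` cones contribute equally.
-/

theorem lintegral_fin_prod {m : ℕ} {α : Fin m → Type*} [∀ i, MeasurableSpace (α i)]
    (μ : ∀ i, Measure (α i)) [∀ i, SigmaFinite (μ i)] {f : ∀ i, α i → ENNReal}
    (hf : ∀ i, Measurable (f i)) :
    ∫⁻ x, ∏ i, f i (x i) ∂Measure.pi μ = ∏ i, ∫⁻ x, f i x ∂μ i := by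
  induction m with
  | zero => simp
  | succ m ih =>
    have htail : Measurable fun x : ∀ i : Fin m, α i.succ => ∏ i, f i.succ (x i) :=
      Finset.measurable_fun_prod _ fun i _ => (hf i.succ).comp (measurable_pi_apply i)
    rw [(measurePreserving_piFinSuccAbove μ 0).symm.lintegral_map_equiv]
    simp_rw [Fin.prod_univ_succ]
    rw [← ih (fun i => μ i.succ) (fun i => hf i.succ),
      ← lintegral_prod_mul (hf 0).aemeasurable htail.aemeasurable]
    rfl

section FiniteProduct

variable {ι : Type*} [Fintype ι] {α : ι → Type*} [∀ i, MeasurableSpace (α i)]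

theorem lintegral_fintype_prod (μ : ∀ i, Measure (α i)) [∀ i, SigmaFinite (μ i)]
    {f : ∀ i, α i → ENNReal} (hf : ∀ i, Measurable (f i)) :
    ∫⁻ x, ∏ i, f i (x i) ∂Measure.pi μ = ∏ i, ∫⁻ x, f i x ∂μ i := by
  let e := (Fintype.equivFin ι).symm
  rw [(measurePreserving_piCongrLeft μ e).lintegral_map_equiv, ← e.prod_comp,
    ← lintegral_fin_prod _ fun i => hf (e i)]
  simp_rw [← e.prod_comp, MeasurableEquiv.coe_piCongrLeft, Equiv.piCongrLeft_apply_apply]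

theorem pi_withDensity (μ : ∀ i, Measure (α i)) [∀ i, SigmaFinite (μ i)]
    {f : ∀ i, α i → ENNReal} (hf : ∀ i, Measurable (f i))
    [∀ i, SigmaFinite ((μ i).withDensity (f i))] :
    Measure.pi (fun i => (μ i).withDensity (f i)) =
      (Measure.pi μ).withDensity fun x => ∏ i, f i (x i) := by
  refine Measure.pi_eq fun s hs => ?_
  rw [withDensity_apply _ (.univ_pi hs), Measure.restrict_pi_pi, lintegral_fintype_prod _ hf]
  exact Finset.prod_congr rfl fun i _ => (withDensity_apply _ (hs i)).symm

end FiniteProduct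

theorem lintegral_pi_insertNth {m : ℕ} {α : Fin (m + 1) → Type*} [∀ i, MeasurableSpace (α i)]
    (μ : ∀ i, Measure (α i)) [∀ i, SigmaFinite (μ i)] (i : Fin (m + 1))
    {f : (∀ i, α i) → ENNReal} (hf : Measurable f) :
    ∫⁻ x, f x ∂Measure.pi μ =
      ∫⁻ y, ∫⁻ z, f (i.insertNth y z) ∂Measure.pi (fun j => μ (i.succAbove j)) ∂μ i := by
  rw [(measurePreserving_piFinSuccAbove μ i).symm.lintegral_map_equiv]
  exact lintegral_prod _ (hf.comp (MeasurableEquiv.measurable _)).aemeasurable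

theorem lintegral_eq_mul_lintegral_comp_smul {E : Type*} [NormedAddCommGroup E] [NormedSpace ℝ E]
    [FiniteDimensional ℝ E] [MeasurableSpace E] [BorelSpace E] (μ : Measure E)
    [μ.IsAddHaarMeasure] {r : ℝ} (hr : r ≠ 0) (f : E → ENNReal) :
    ∫⁻ x, f x ∂μ = ENNReal.ofReal |r ^ Module.finrank ℝ E| * ∫⁻ x, f (r • x) ∂μ := by
  have hmap : ∫⁻ x, f (r • x) ∂μ = ∫⁻ x, f x ∂μ.map (r • ·) :=
    (lintegral_map_equiv f (MeasurableEquiv.smul₀ r hr)).symm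
  rw [hmap, Measure.map_addHaar_smul μ hr, lintegral_smul_measure, smul_eq_mul, ← mul_assoc,
    ← ENNReal.ofReal_mul (abs_nonneg _), ← abs_mul, mul_inv_cancel₀ (pow_ne_zero _ hr), abs_one,
    ENNReal.ofReal_one, one_mul]

theorem smul_insertNth {M : Type*} {m : ℕ} {α : Fin (m + 1) → Type*} [∀ i, SMul M (α i)]
    (i : Fin (m + 1)) (c : M) (a : α i) (x : ∀ j, α (i.succAbove j)) :
    c • i.insertNth a x = (i.insertNth (c • a) (c • x) : ∀ j, α j) := by
  ext j
  cases j using Fin.succAboveCases i <;> simp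

theorem setLIntegral_halfSpace_eq_lintegral_smul_insertNth {m : ℕ} (i : Fin (m + 1))
    {f : (Fin (m + 1) → ℝ) → ENNReal} (hf : Measurable f) :
    ∫⁻ x in {x | 0 ≤ x i}, f x =
      ∫⁻ u : Fin m → ℝ, ∫⁻ y in Set.Ioi (0 : ℝ),
        ENNReal.ofReal (y ^ m) * f (y • i.insertNth 1 u) := by
  have hmeas : MeasurableSet {x : Fin (m + 1) → ℝ | 0 ≤ x i} :=
    measurableSet_le measurable_const (measurable_pi_apply i)
  have hscale : Set.EqOn (fun y => ∫⁻ z : Fin m → ℝ, f (i.insertNth y z))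
      (fun y => ∫⁻ u : Fin m → ℝ, ENNReal.ofReal (y ^ m) * f (y • i.insertNth 1 u))
      (Set.Ioi 0) := fun y (hy : 0 < y) => by
    dsimp only
    rw [lintegral_eq_mul_lintegral_comp_smul _ hy.ne', Module.finrank_fin_fun,
      abs_of_pos (pow_pos hy m), lintegral_const_mul' _ _ ENNReal.ofReal_ne_top]
    simp_rw [smul_insertNth, smul_eq_mul, mul_one]
  have hmeas_polar : Measurable fun p : ℝ × (Fin m → ℝ) =>
      ENNReal.ofReal (p.1 ^ m) * f (p.1 • i.insertNth 1 p.2) := by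
    have : Measurable fun p : ℝ × (Fin m → ℝ) => p.1 • (i.insertNth 1 p.2 : Fin (m + 1) → ℝ) :=
      (continuous_fst.smul (continuous_const.finInsertNth i continuous_snd)).measurable
    fun_prop
  calc ∫⁻ x in {x | 0 ≤ x i}, f x
      = ∫⁻ y in Set.Ici (0 : ℝ), ∫⁻ z : Fin m → ℝ, f (i.insertNth y z) := by
        rw [← lintegral_indicator hmeas, volume_pi,
          lintegral_pi_insertNth _ i (hf.indicator hmeas), ← lintegral_indicator measurableSet_Ici]
        refine lintegral_congr fun y => ?_
        by_cases hy : 0 ≤ y <;> simp [Set.indicator, hy, volume_pi]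
    _ = ∫⁻ y in Set.Ioi (0 : ℝ), ∫⁻ z : Fin m → ℝ, f (i.insertNth y z) :=
        setLIntegral_congr Ioi_ae_eq_Ici.symm
    _ = ∫⁻ y in Set.Ioi (0 : ℝ), ∫⁻ u : Fin m → ℝ,
          ENNReal.ofReal (y ^ m) * f (y • i.insertNth 1 u) :=
        setLIntegral_congr_fun measurableSet_Ioi hscale
    _ = _ := lintegral_lintegral_swap hmeas_polar.aemeasurable

-- Since `f` need not be measurable, the right-hand side is a lower integral.
theorem lintegral_withDensity_of_measurable {α : Type*} [MeasurableSpace α] (μ : Measure α)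
    [SFinite μ] (f : α → ENNReal) {g : α → ENNReal} (hg : Measurable g) (hg_top : ∀ x, g x ≠ ⊤) :
    ∫⁻ x, g x ∂μ.withDensity f = ∫⁻ x, f x * g x ∂μ := by
  apply le_antisymm
  · obtain ⟨f', hf', hle, heq⟩ := exists_measurable_le_withDensity_eq μ f
    rw [← heq, lintegral_withDensity_eq_lintegral_mul _ hf' hg]
    exact lintegral_mono fun x => mul_le_mul_left (hle x) _
  · rw [← iSup_lintegral_measurable_le_eq_lintegral]
    refine iSup₂_le fun h hh => iSup_le fun hle => ?_
    -- A measurable minorant `h` of `f * g` yields the measurable minorant `h / g` of `f`.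
    have hquot : h / g ≤ f := fun x => ENNReal.div_le_of_le_mul (hle x)
    calc ∫⁻ x, h x ∂μ = ∫⁻ x, (h / g * g) x ∂μ := lintegral_congr fun x =>
          (ENNReal.div_mul_cancel' (fun hx => by simpa [hx] using hle x)
            fun hx => absurd hx (hg_top x)).symm
      _ = ∫⁻ x, g x ∂μ.withDensity (h / g) :=
          (lintegral_withDensity_eq_lintegral_mul _ (hh.div hg) hg).symm
      _ ≤ ∫⁻ x, g x ∂μ.withDensity f :=
          lintegral_mono' (withDensity_mono (ae_of_all _ hquot)) le_rfl

theorem withDensity_mul_of_measurable_right {α : Type*} [MeasurableSpace α] (μ : Measure α)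
    [SFinite μ] (f : α → ENNReal) {g : α → ENNReal} (hg : Measurable g) (hg_top : ∀ x, g x ≠ ⊤) :
    μ.withDensity (f * g) = (μ.withDensity f).withDensity g := by
  ext s hs
  rw [withDensity_apply _ hs, withDensity_apply _ hs, restrict_withDensity hs,
    lintegral_withDensity_of_measurable _ _ hg hg_top]
  rfl

theorem map_withDensity_measurableEquiv {α β : Type*} [MeasurableSpace α] [MeasurableSpace β]
    (μ : Measure α) (f : α → ENNReal) (e : α ≃ᵐ β) :
    (μ.withDensity f).map e = (μ.map e).withDensity (f ∘ e.symm) := by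
  ext s hs
  rw [e.map_apply, withDensity_apply _ (e.measurable hs), withDensity_apply _ hs,
    e.restrict_map, lintegral_map_equiv]
  simp

theorem map_add_div_withDensity_volume (f : ℝ → ENNReal) {a : ℝ} (ha : a ≠ 0) (b : ℝ) :
    (volume.withDensity f).map (fun s => (s + b) / a) =
      volume.withDensity fun t => ENNReal.ofReal |a| * f (a * t - b) := by
  let e : ℝ ≃ᵐ ℝ :=
    (MeasurableEquiv.addRight b).trans (MeasurableEquiv.mulRight₀ a⁻¹ (inv_ne_zero ha))
  have he : ⇑e = fun s => (s + b) / a := rfl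
  have he_symm : ⇑e.symm = fun t => a * t - b := by
    ext t
    rw [e.symm_apply_eq]
    simp [he, ha]
  have hvol : volume.map e = ENNReal.ofReal |a| • volume := by
    have hcomp : ⇑e = (· * a⁻¹) ∘ (· + b) := rfl
    rw [hcomp, ← Measure.map_map (by fun_prop) (by fun_prop), map_add_right_eq_self,
      Real.map_volume_mul_right (inv_ne_zero ha), inv_inv]
  rw [← he, map_withDensity_measurableEquiv, hvol, withDensity_smul_measure,
    ← withDensity_smul' _ _ ENNReal.ofReal_ne_top, he_symm]
  rfl

theorem addHaar_setOf_eval_eq_eval {ι : Type*} [Finite ι] (μ : Measure (ι → ℝ))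
    [μ.IsAddHaarMeasure] {i j : ι} (hij : i ≠ j) : μ {x | x i = x j} = 0 := by
  classical
  have := Fintype.ofFinite ι
  let V : Submodule ℝ (ι → ℝ) :=
    LinearMap.eqLocus (LinearMap.proj (φ := fun _ => ℝ) i) (LinearMap.proj j)
  have hV : V ≠ ⊤ := fun h => by
    have hsingle : Pi.single i 1 ∈ V := h ▸ Submodule.mem_top
    simp [V, hij] at hsingle
  exact Measure.addHaar_submodule μ V hV

/-- The cone of points with nonnegative coordinates whose largest coordinate is the `i`-th one,
ties being allowed. -/
def maxCone {ι : Type*} (i : ι) : Set (ι → ℝ) := {x | ∀ j, 0 ≤ x j ∧ x j ≤ x i}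

theorem measurableSet_maxCone {ι : Type*} [Countable ι] (i : ι) :
    MeasurableSet (maxCone i) := by
  simp only [maxCone, Set.ofPred_forall, Set.ofPred_and]
  exact .iInter fun j => (measurableSet_le measurable_const (measurable_pi_apply j)).inter
    (measurableSet_le (measurable_pi_apply j) (measurable_pi_apply i))

theorem iUnion_maxCone {ι : Type*} [Finite ι] [Nonempty ι] :
    ⋃ i, maxCone i = Set.Ici (0 : ι → ℝ) := by
  ext x
  simp only [Set.mem_iUnion]
  constructor
  · rintro ⟨i, hi⟩ j
    exact (hi j).1
  · intro hx
    obtain ⟨i, hi⟩ := Finite.exists_max x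
    exact ⟨i, fun j => ⟨hx j, hi j⟩⟩

theorem pairwise_aedisjoint_maxCone {ι : Type*} [Finite ι] (μ : Measure (ι → ℝ))
    [μ.IsAddHaarMeasure] : Pairwise (Function.onFun (AEDisjoint μ) maxCone) := fun i j hij =>
  measure_mono_null (fun _ ⟨hi, hj⟩ => le_antisymm (hj i).2 (hi j).2)
    (addHaar_setOf_eval_eq_eval μ hij)

theorem setLIntegral_Ici_zero_eq_sum_maxCone {ι : Type*} [Fintype ι] [Nonempty ι]
    (μ : Measure (ι → ℝ)) [μ.IsAddHaarMeasure] (f : (ι → ℝ) → ENNReal) :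
    ∫⁻ x in Set.Ici 0, f x ∂μ = ∑ i, ∫⁻ x in maxCone i, f x ∂μ := by
  rw [← iUnion_maxCone, lintegral_iUnion₀ (fun i => (measurableSet_maxCone i).nullMeasurableSet)
    (pairwise_aedisjoint_maxCone μ), tsum_fintype]

theorem smul_insertNth_one_mem_maxCone {m : ℕ} {i : Fin (m + 1)} {y : ℝ} (hy : 0 < y)
    {u : Fin m → ℝ} : y • i.insertNth 1 u ∈ maxCone i ↔ u ∈ Set.Icc 0 1 := by
  simp [maxCone, Fin.forall_iff_succAbove i, hy, hy.le, Pi.le_def, forall_and]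

theorem setLIntegral_maxCone_eq_lintegral_smul_insertNth {m : ℕ} (i : Fin (m + 1))
    {f : (Fin (m + 1) → ℝ) → ENNReal} (hf : Measurable f) :
    ∫⁻ x in maxCone i, f x =
      ∫⁻ u in Set.Icc (0 : Fin m → ℝ) 1, ∫⁻ y in Set.Ioi (0 : ℝ),
        ENNReal.ofReal (y ^ m) * f (y • i.insertNth 1 u) := by
  have hsub : maxCone i ⊆ {x | 0 ≤ x i} := fun x hx => (hx i).1
  have hcube (u : Fin m → ℝ) : Set.EqOn
      (fun y : ℝ => ENNReal.ofReal (y ^ m) * (maxCone i).indicator f (y • i.insertNth 1 u))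
      (fun y => ENNReal.ofReal (y ^ m) *
        (Set.Icc 0 1).indicator (fun u => f (y • i.insertNth 1 u)) u) (Set.Ioi 0) :=
    fun y (hy : 0 < y) => by
      classical simp only [Set.indicator_apply, smul_insertNth_one_mem_maxCone hy]
  rw [← Set.inter_eq_left.mpr hsub, ← setLIntegral_indicator (measurableSet_maxCone i),
    setLIntegral_halfSpace_eq_lintegral_smul_insertNth i (hf.indicator (measurableSet_maxCone i)),
    ← lintegral_indicator measurableSet_Icc]
  refine lintegral_congr fun u => (setLIntegral_congr_fun measurableSet_Ioi (hcube u)).trans ?_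
  by_cases hu : u ∈ Set.Icc 0 1 <;> simp [hu]

theorem lintegral_Ioi_pow_mul_exp_neg_mul {r : ℝ} (hr : 0 < r) (m : ℕ) :
    ∫⁻ y in Set.Ioi (0 : ℝ), ENNReal.ofReal (y ^ m * Real.exp (-(r * y))) =
      ENNReal.ofReal (m.factorial / r ^ (m + 1)) := by
  have h := Real.integral_rpow_mul_exp_neg_mul_Ioi (a := m + 1) (by positivity) hr
  simp only [add_sub_cancel_right, Real.rpow_natCast, Real.Gamma_nat_eq_factorial] at h
  have hval : (1 / r) ^ ((m : ℝ) + 1) * m.factorial = m.factorial / r ^ (m + 1) := by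
    rw [← Nat.cast_succ, Real.rpow_natCast, one_div_pow, one_div_mul_eq_div]
  have hint : IntegrableOn (fun y : ℝ => y ^ m * Real.exp (-(r * y))) (Set.Ioi 0) :=
    .of_integral_ne_zero (by rw [h, hval]; positivity)
  rw [← hval, ← h, ofReal_integral_eq_lintegral_ofReal hint]
  filter_upwards [ae_restrict_mem measurableSet_Ioi] with y hy
  have : 0 < y := hy
  positivity

theorem iidExp_eq_withDensity {n : ℕ} {r : ℝ} (hr : 0 < r) :
    iidExp n r = (volume.restrict (Set.Ici 0)).withDensity fun x =>
      ENNReal.ofReal (r ^ n * Real.exp (-(r * ∑ i, x i))) := by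
  have hpdf : Measurable (exponentialPDF r) := (measurable_exponentialPDFReal r).ennreal_ofReal
  have : IsProbabilityMeasure (volume.withDensity (exponentialPDF r)) :=
    isProbabilityMeasure_expMeasure hr
  have hiid : iidExp n r = Measure.pi fun _ => volume.withDensity (exponentialPDF r) := rfl
  rw [hiid, pi_withDensity _ fun _ => hpdf, ← volume_pi, ← withDensity_indicator measurableSet_Ici]
  congr 1 with x
  by_cases hx : x ∈ Set.Ici 0
  · rw [Set.indicator_of_mem hx]
    simp_rw [exponentialPDF_of_nonneg (hx _)]
    rw [← ENNReal.ofReal_prod_of_nonneg fun _ _ => by positivity, Finset.prod_mul_distrib,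
      ← Real.exp_sum, Finset.sum_neg_distrib, Finset.mul_sum, Finset.prod_const, Finset.card_fin]
  · obtain ⟨i, hi⟩ : ∃ i, x i < 0 := by simpa [Pi.le_def] using hx
    rw [Set.indicator_of_notMem hx]
    exact Finset.prod_eq_zero (Finset.mem_univ i) (exponentialPDF_of_neg hi)

theorem lintegral_Ioi_pow_mul_exp_neg_sum_smul {ι : Type*} [Fintype ι] {r : ℝ} (hr : 0 < r)
    (m : ℕ) {v : ι → ℝ} (hv : 0 < ∑ j, v j) :
    ∫⁻ y in Set.Ioi (0 : ℝ), ENNReal.ofReal (y ^ m) *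
        ENNReal.ofReal (r ^ (m + 1) * Real.exp (-(r * ∑ j, (y • v) j))) =
      ENNReal.ofReal (m.factorial / (∑ j, v j) ^ (m + 1)) := by
  have hgamma : Set.EqOn
      (fun y : ℝ => ENNReal.ofReal (y ^ m) *
        ENNReal.ofReal (r ^ (m + 1) * Real.exp (-(r * ∑ j, (y • v) j))))
      (fun y => ENNReal.ofReal (r ^ (m + 1)) *
        ENNReal.ofReal (y ^ m * Real.exp (-(r * (∑ j, v j) * y)))) (Set.Ioi 0) :=
    fun y (hy : 0 < y) => by
      simp only [Pi.smul_apply, smul_eq_mul, ← Finset.mul_sum]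
      rw [← ENNReal.ofReal_mul (by positivity), ← ENNReal.ofReal_mul (by positivity)]
      ring_nf
  rw [setLIntegral_congr_fun measurableSet_Ioi hgamma,
    lintegral_const_mul' _ _ ENNReal.ofReal_ne_top,
    lintegral_Ioi_pow_mul_exp_neg_mul (by positivity), ← ENNReal.ofReal_mul (by positivity),
    mul_pow]
  congr 1
  field_simp

theorem lintegral_iidExp_of_smul_invariant {m : ℕ} {r : ℝ} (hr : 0 < r)
    {h : (Fin (m + 1) → ℝ) → ENNReal} (hh : Measurable h)
    (h_smul : ∀ y : ℝ, 0 < y → ∀ x, h (y • x) = h x) :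
    ∫⁻ x, h x ∂iidExp (m + 1) r =
      ∑ i : Fin (m + 1), ∫⁻ u in Set.Icc (0 : Fin m → ℝ) 1,
        ENNReal.ofReal (m.factorial / (∑ j, u j + 1) ^ (m + 1)) * h (i.insertNth 1 u) := by
  rw [iidExp_eq_withDensity hr, lintegral_withDensity_eq_lintegral_mul _ (by fun_prop) hh,
    setLIntegral_Ici_zero_eq_sum_maxCone]
  refine Finset.sum_congr rfl fun i _ => ?_
  rw [setLIntegral_maxCone_eq_lintegral_smul_insertNth i ((by fun_prop : Measurable _).mul hh)]
  refine setLIntegral_congr_fun measurableSet_Icc fun u hu => ?_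
  set v : Fin (m + 1) → ℝ := i.insertNth 1 u
  have hsum : ∑ j, v j = ∑ j, u j + 1 := by simp [v, Fin.sum_univ_succAbove _ i, add_comm]
  have hsum_pos : 0 < ∑ j, v j := by
    have : 0 ≤ ∑ j, u j := Finset.sum_nonneg fun j _ => hu.1 j
    rw [hsum]
    positivity
  rw [← hsum, ← lintegral_Ioi_pow_mul_exp_neg_sum_smul hr m hsum_pos,
    ← lintegral_mul_const _ (by fun_prop)]
  refine setLIntegral_congr_fun measurableSet_Ioi fun y hy => ?_
  simp only [Pi.mul_apply, h_smul y hy, mul_assoc]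

theorem sampleMax_eq_of_forall_le {n : ℕ} {x : Fin n → ℝ} {i : Fin n} (h : ∀ j, x j ≤ x i) :
    sampleMax x = x i :=
  have : Nonempty (Fin n) := ⟨i⟩
  le_antisymm (ciSup_le h) (le_ciSup (Finite.bddAbove_range x) i)

theorem measurable_tau {n : ℕ} : Measurable (tau : (Fin n → ℝ) → ℝ) := by
  unfold tau sampleMean sampleMax
  exact Measurable.div (by fun_prop) (Measurable.iSup fun i => measurable_pi_apply i)

theorem sampleMax_smul {n : ℕ} {y : ℝ} (hy : 0 ≤ y) (x : Fin n → ℝ) :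
    sampleMax (y • x) = y * sampleMax x :=
  (Real.mul_iSup_of_nonneg hy x).symm

theorem sampleMean_smul {n : ℕ} (y : ℝ) (x : Fin n → ℝ) :
    sampleMean (y • x) = y * sampleMean x := by
  simp only [sampleMean, Pi.smul_apply, smul_eq_mul, ← Finset.mul_sum, mul_div_assoc]

theorem tau_smul {n : ℕ} {y : ℝ} (hy : 0 < y) (x : Fin n → ℝ) : tau (y • x) = tau x := by
  rw [tau, sampleMean_smul, sampleMax_smul hy.le, mul_div_mul_left _ _ hy.ne', tau]

theorem tau_insertNth_one {m : ℕ} (i : Fin (m + 1)) {u : Fin m → ℝ} (hu : u ≤ 1) :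
    tau (i.insertNth 1 u : Fin (m + 1) → ℝ) = (∑ j, u j + 1) / (m + 1) := by
  have hmax : sampleMax (i.insertNth 1 u : Fin (m + 1) → ℝ) = 1 := by
    rw [sampleMax_eq_of_forall_le (i := i), Fin.insertNth_apply_same]
    simpa [Fin.forall_iff_succAbove i, Pi.le_def] using hu
  simp [tau, hmax, sampleMean, Fin.sum_univ_succAbove _ i, add_comm]

theorem iidUniform_one (n : ℕ) : iidUniform n 1 = volume.restrict (Set.Icc 0 1) := by
  have hunif : uniformMeasure 1 = volume.restrict (Set.Icc 0 1) := by simp [uniformMeasure]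
  rw [iidUniform, hunif, ← Measure.restrict_pi_pi, Set.pi_univ_Icc, volume_pi]
  rfl

theorem lintegral_irwinHall (m : ℕ) {f : ℝ → ENNReal} (hf : Measurable f) :
    ∫⁻ s, f s ∂irwinHall m = ∫⁻ u in Set.Icc (0 : Fin m → ℝ) 1, f (∑ j, u j) := by
  rw [irwinHall, iidUniform_one, lintegral_map hf (by fun_prop)]

theorem ae_irwinHall_mem_Icc (m : ℕ) : ∀ᵐ s ∂irwinHall m, s ∈ Set.Icc (0 : ℝ) m := by
  rw [irwinHall, iidUniform_one]
  refine (ae_map_iff (by fun_prop) measurableSet_Icc).mpr ?_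
  filter_upwards [ae_restrict_mem measurableSet_Icc] with u hu
  exact ⟨Finset.sum_nonneg fun j _ => hu.1 j, by
    simpa using Finset.sum_le_sum fun j (_ : j ∈ Finset.univ) => hu.2 j⟩

theorem map_tau_iidExp (m : ℕ) {r : ℝ} (hr : 0 < r) :
    (iidExp (m + 1) r).map tau =
      ((irwinHall m).withDensity fun s =>
        ENNReal.ofReal ((m + 1).factorial / (s + 1) ^ (m + 1))).map
          fun s : ℝ => (s + 1) / (m + 1) := by
  refine Measure.ext_of_lintegral _ fun g hg => ?_
  let w : ℝ → ENNReal := fun s => ENNReal.ofReal (m.factorial / (s + 1) ^ (m + 1))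
  have hw (s : ℝ) : ENNReal.ofReal ((m + 1).factorial / (s + 1) ^ (m + 1)) = (m + 1) * w s := by
    rw [← Nat.cast_succ, ← ENNReal.ofReal_natCast, ← ENNReal.ofReal_mul (by positivity),
      Nat.factorial_succ, Nat.cast_mul, mul_div_assoc]
  have hpiece (i : Fin (m + 1)) : Set.EqOn
      (fun u : Fin m → ℝ => w (∑ j, u j) * g (tau (i.insertNth 1 u : Fin (m + 1) → ℝ)))
      (fun u => w (∑ j, u j) * g ((∑ j, u j + 1) / (m + 1))) (Set.Icc 0 1) := fun u hu => by
    dsimp only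
    rw [tau_insertNth_one i hu.2]
  calc ∫⁻ t, g t ∂(iidExp (m + 1) r).map tau
      = ∑ i : Fin (m + 1), ∫⁻ u in Set.Icc (0 : Fin m → ℝ) 1,
          w (∑ j, u j) * g (tau (i.insertNth 1 u : Fin (m + 1) → ℝ)) := by
        rw [lintegral_map hg measurable_tau]
        exact lintegral_iidExp_of_smul_invariant hr (hg.comp measurable_tau) fun y hy x => by
          rw [tau_smul hy]
    _ = ∑ _i : Fin (m + 1), ∫⁻ u in Set.Icc (0 : Fin m → ℝ) 1,
          w (∑ j, u j) * g ((∑ j, u j + 1) / (m + 1)) :=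
        Finset.sum_congr rfl fun i _ => setLIntegral_congr_fun measurableSet_Icc (hpiece i)
    _ = (m + 1) * ∫⁻ s, w s * g ((s + 1) / (m + 1)) ∂irwinHall m := by
        rw [lintegral_irwinHall m (by fun_prop)]
        simp
    _ = ∫⁻ s, (m + 1) * w s * g ((s + 1) / (m + 1)) ∂irwinHall m := by
        simp_rw [mul_assoc]
        exact (lintegral_const_mul _ (by fun_prop)).symm
    _ = _ := by
        simp_rw [hw]
        rw [lintegral_map hg (by fun_prop),
          lintegral_withDensity_eq_lintegral_mul _ (by fun_prop) (by fun_prop)]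
        rfl

theorem map_add_one_div_withDensity_irwinHall {m : ℕ} {f w : ℝ → ENNReal}
    (hf : irwinHall m = volume.withDensity f) (hw : Measurable w) (hw_top : ∀ s, w s ≠ ⊤) :
    ((irwinHall m).withDensity w).map (fun s => (s + 1) / (m + 1 : ℝ)) =
      volume.withDensity ((Set.Icc (m + 1 : ℝ)⁻¹ 1).indicator fun t =>
        ENNReal.ofReal (m + 1) * (f ((m + 1) * t - 1) * w ((m + 1) * t - 1))) := by
  have hm : (0 : ℝ) < m + 1 := by positivity
  have hdensity : (irwinHall m).withDensity w =
      volume.withDensity ((Set.Icc 0 (m : ℝ)).indicator (f * w)) := by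
    rw [withDensity_indicator measurableSet_Icc, withDensity_mul_of_measurable_right _ _ hw hw_top,
      ← restrict_withDensity measurableSet_Icc, ← hf,
      Measure.restrict_eq_self_of_ae_mem (ae_irwinHall_mem_Icc m)]
  have hmem (t : ℝ) : (m + 1) * t - 1 ∈ Set.Icc 0 (m : ℝ) ↔ t ∈ Set.Icc (m + 1 : ℝ)⁻¹ 1 := by
    rw [Set.mem_Icc, Set.mem_Icc, sub_nonneg, sub_le_iff_le_add, inv_le_iff_one_le_mul₀' hm,
      mul_le_iff_le_one_right hm]
  rw [hdensity, map_add_div_withDensity_volume _ hm.ne', abs_of_pos hm]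
  congr 1 with t
  by_cases ht : t ∈ Set.Icc (m + 1 : ℝ)⁻¹ 1
  · rw [Set.indicator_of_mem ht, Set.indicator_of_mem ((hmem t).mpr ht), Pi.mul_apply]
  · rw [Set.indicator_of_notMem ht, Set.indicator_of_notMem (mt (hmem t).mp ht), mul_zero]

/-- Under an i.i.d. `Exponential(λ)` sample, `τ_n` has density
`t ↦ (n!/n^{n-1}) · I_{n-1}(n·t − 1) / t^n` on `[1/n, 1]`, where `I_{n-1}` is the
Irwin–Hall density with parameter `n − 1`. -/
theorem tau_density_exponential
    (n : ℕ) (hn : 2 ≤ n) (lam : ℝ) (hlam : 0 < lam)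
    (I : ℝ → ℝ)
    (hI : irwinHall (n - 1) = volume.withDensity fun s => ENNReal.ofReal (I s)) :
    (iidExp n lam).map tau =
      volume.withDensity fun t =>
        ENNReal.ofReal
          (if t ∈ Set.Icc ((n : ℝ)⁻¹) 1 then
            (Nat.factorial n : ℝ) / (n : ℝ) ^ (n - 1) * I ((n : ℝ) * t - 1) / t ^ n
          else 0) := by
  obtain ⟨m, rfl⟩ : ∃ m, n = m + 1 := ⟨n - 1, by omega⟩
  rw [Nat.add_sub_cancel] at hI ⊢
  rw [map_tau_iidExp m hlam, map_add_one_div_withDensity_irwinHall hI (by fun_prop) (by simp)]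
  congr 1 with t
  rw [Nat.cast_succ]
  by_cases ht : t ∈ Set.Icc (m + 1 : ℝ)⁻¹ 1
  · have ht_pos : 0 < t := lt_of_lt_of_le (by positivity) ht.1
    rw [Set.indicator_of_mem ht, if_pos ht, sub_add_cancel, mul_comm (ENNReal.ofReal (I _)),
      ← ENNReal.ofReal_mul (by positivity), ← ENNReal.ofReal_mul (by positivity), mul_pow]
    congr 1
    field_simp
    ring
  · rw [Set.indicator_of_notMem ht, if_neg ht, ENNReal.ofReal_zero]
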